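/- arXiv:0903.2864 — 2 statements merged into one kernel-verified Lean document; each statement's English description precedes it below -/
import Mathlib

section
/- Let k ≥ 1 and let S_2≀S_k denote the subgroup of S_{2k} consisting of permutations that map each pair {2i−1,2i} (1 ≤ i ≤ k) to some pair {2j−1,2j}. Then the permutation character of S_{2k} on the cosets of S_2≀S_k is multiplicity-free, and, regarding S_{2k} as the subgroup of S_{2k+1} fixing the point 2k+1, the permutation character of S_{2k+1} on the cosets of S_2≀S_k is also multiplicity-free. -/
/-- The permutation character of `G` on the cosets of `H` is multiplicity-free:
every irreducible complex representation of `G` has at most a one-dimensional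
subspace of `H`-fixed vectors. -/
noncomputable def IsMultFree {G : Type} [Group G] (H : Subgroup G) : Prop :=
  ∀ V : FDRep ℂ G, CategoryTheory.Simple V →
    Module.finrank ℂ (Representation.invariants (V.ρ.comp H.subtype)) ≤ 1

/-- The subgroup of permutations preserving the partition of `α` into the fibres of a
colouring `c` (two points get mapped to the same fibre iff they lie in the same fibre). -/
def colorStab {α : Type*} {β : Sort*} (c : α → β) : Subgroup (Equiv.Perm α) where
  carrier := {g | ∀ i j : α, c i = c j ↔ c (g i) = c (g j)}
  one_mem' := by intro i j; simp
  mul_mem' := by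
    intro a b ha hb i j
    simpa [Equiv.Perm.mul_apply] using (hb i j).trans (ha (b i) (b j))
  inv_mem' := by
    intro g hg i j
    simpa using (hg (g⁻¹ i) (g⁻¹ j)).symm

/-- The natural embedding of the symmetric group on `α` into the symmetric group on
`Option α` (one extra point, which is fixed). -/
def optionHom (α : Type*) : Equiv.Perm α →* Equiv.Perm (Option α) where
  toFun e := e.optionCongr
  map_one' := by
    ext x
    cases x <;> simp
  map_mul' a b := by
    ext x
    cases x <;> simp [Equiv.Perm.mul_apply]

open CategoryTheory in
theorem simple_sub {G : Type} [Group G] (V : FDRep ℂ G) (hV : CategoryTheory.Simple V)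
    (N : Submodule ℂ V) (hN : ∀ g, ∀ v ∈ N, V.ρ g v ∈ N) (v : V) (hv : v ∈ N) (hv0 : v ≠ 0) :
    N = ⊤ := by
  let ρN : Representation ℂ G N :=
    { toFun := fun g => (V.ρ g).restrict (hN g)
      map_one' := by ext x; simp
      map_mul' := by intro a b; ext x; simp }
  let W : FDRep ℂ G := FDRep.of ρN
  let f : W ⟶ V := ⟨InducedCategory.homMk (ModuleCat.ofHom N.subtype), fun g => by
    ext x; rfl⟩
  have hm : Mono f := by
    apply ConcreteCategory.mono_of_injective
    exact N.injective_subtype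
  have hne : f ≠ 0 := by
    intro h
    apply hv0
    have := congrArg (fun φ : W ⟶ V => φ.hom.hom.hom ⟨v, hv⟩) h
    exact this
  have := isIso_of_mono_of_nonzero hne
  have hs : Function.Surjective f.hom.hom.hom :=
    (FDRep.isoToLinearEquiv (asIso f)).surjective
  rw [eq_top_iff]
  rintro x -
  obtain ⟨y, rfl⟩ := hs x
  exact y.2

theorem gelfand {G : Type} [Group G] [Finite G] (H : Subgroup G)
    (h : ∀ g : G, ∃ a ∈ H, ∃ b ∈ H, g⁻¹ = a * g * b) : IsMultFree H := by
  classical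
  intro V hV
  have := Fintype.ofFinite H
  let σ : Representation ℂ H V := V.ρ.comp H.subtype
  let _ : Invertible (Fintype.card H : ℂ) := invertibleOfNonzero (by simp)
  let e := σ.averageMap
  have he : ∀ v, e v ∈ σ.invariants := σ.averageMap_invariant
  have he' : ∀ v ∈ σ.invariants, e v = v := σ.averageMap_id
  have hf : ∀ v ∈ σ.invariants, ∀ a ∈ H, V.ρ a v = v := fun v hv a ha => hv ⟨a, ha⟩
  have hdef : ∀ v, e v = (⅟(Fintype.card H : ℂ)) • ∑ a : H, V.ρ a v := by
    intro v
    simp [e, σ, Representation.averageMap, GroupAlgebra.average, Representation.asAlgebraHom_def]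
  have hleft : ∀ a ∈ H, ∀ v, e (V.ρ a v) = e v := by
    intro a ha v
    rw [hdef, hdef]
    congr 1
    refine Fintype.sum_equiv (Equiv.mulRight ⟨a, ha⟩) _ _ ?_
    intro x
    simp
  have hinv : ∀ g, ∀ v ∈ σ.invariants, e (V.ρ g⁻¹ v) = e (V.ρ g v) := by
    intro g v hv
    obtain ⟨a, ha, b, hb, hg⟩ := h g
    rw [hg, map_mul, map_mul, Module.End.mul_apply, Module.End.mul_apply, hleft a ha, hf v hv b hb]
  have hexp : ∀ g g' v, e (V.ρ g (e (V.ρ g' v))) =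
      (⅟(Fintype.card H : ℂ)) • ∑ a : H, e (V.ρ (g * a * g') v) := by
    intro g g' v
    rw [hdef (V.ρ g' v)]
    simp
  have hcomm : ∀ g g', ∀ v ∈ σ.invariants,
      e (V.ρ g (e (V.ρ g' v))) = e (V.ρ g' (e (V.ρ g v))) := by
    intro g g' v hv
    rw [← hinv g v hv, ← hinv g' _ (he _), hexp, hexp]
    congr 1
    refine Fintype.sum_equiv (Equiv.inv H) _ _ ?_
    intro a
    rw [← hinv _ v hv]
    simp [mul_assoc]
  -- cyclicity
  have hcyc : ∀ v ∈ σ.invariants, v ≠ 0 → ∀ E : Submodule ℂ V,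
      (∀ g, e (V.ρ g v) ∈ E) → σ.invariants ≤ E := by
    intro v hv hv0 E hE w hw
    have htop := simple_sub V hV (Submodule.span ℂ (Set.range fun g => V.ρ g v)) ?_ v
      (Submodule.subset_span ⟨1, by simp⟩) hv0
    · have hwm : w ∈ Submodule.span ℂ (Set.range fun g => V.ρ g v) := by rw [htop]; trivial
      rw [← he' w hw]
      have : Submodule.span ℂ (Set.range fun g => V.ρ g v) ≤ E.comap e := by
        rw [Submodule.span_le]
        rintro _ ⟨g, rfl⟩
        exact hE g
      exact this hwm
    · intro g x hx
      have : Submodule.span ℂ (Set.range fun g => V.ρ g v) ≤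
          (Submodule.span ℂ (Set.range fun g => V.ρ g v)).comap (V.ρ g) := by
        rw [Submodule.span_le]
        rintro _ ⟨g', rfl⟩
        exact Submodule.subset_span ⟨g * g', by simp⟩
      exact this hx
  have hscal : ∀ g, ∃ c : ℂ, ∀ v ∈ σ.invariants, e (V.ρ g v) = c • v := by
    intro g
    by_cases hn : Nontrivial σ.invariants
    · let T : Module.End ℂ σ.invariants :=
        (LinearMap.codRestrict σ.invariants e he).comp ((V.ρ g).comp σ.invariants.subtype)
      obtain ⟨c, hc⟩ := Module.End.exists_eigenvalue T
      obtain ⟨v, hv⟩ := hc.exists_hasEigenvector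
      have hTv : e (V.ρ g v) = c • (v : V) := congrArg Subtype.val hv.apply_eq_smul
      refine ⟨c, fun w hw => ?_⟩
      have := hcyc v v.2 (fun h0 => hv.2 (Subtype.ext h0))
        (LinearMap.ker (e.comp (V.ρ g) - c • LinearMap.id)) ?_ hw
      · simpa [sub_eq_zero] using this
      · intro g'
        simp only [LinearMap.mem_ker, LinearMap.sub_apply, LinearMap.comp_apply,
          LinearMap.smul_apply, LinearMap.id_apply, sub_eq_zero]
        rw [hcomm g g' v v.2, hTv]
        simp
    · rw [not_nontrivial_iff_subsingleton] at hn
      refine ⟨0, fun v hv => ?_⟩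
      have : v = 0 := congrArg Subtype.val (Subsingleton.elim (⟨v, hv⟩ : σ.invariants) 0)
      simp [this]
  change Module.finrank ℂ σ.invariants ≤ 1
  by_cases hn : Nontrivial σ.invariants
  · obtain ⟨v, hv⟩ := exists_ne (0 : σ.invariants)
    refine finrank_le_one v fun w => ?_
    have := hcyc v v.2 (fun h0 => hv (Subtype.ext h0)) (Submodule.span ℂ {(v : V)}) ?_ w.2
    · obtain ⟨c, hc⟩ := Submodule.mem_span_singleton.1 this
      exact ⟨c, Subtype.ext hc⟩
    · intro g
      obtain ⟨c, hc⟩ := hscal g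
      rw [hc v v.2]
      exact Submodule.smul_mem _ _ (Submodule.mem_span_singleton_self _)
  · rw [not_nontrivial_iff_subsingleton] at hn
    rw [Module.finrank_zero_of_subsingleton]; exact Nat.zero_le _

theorem swap_invol {α : Type*} (σ τ : Equiv.Perm α) (hσ : σ * σ = 1) (hτ : τ * τ = 1)
    (fσ : ∀ a, σ a ≠ a) (fτ : ∀ a, τ a ≠ a) (p : α) :
    ∃ x : Equiv.Perm α, x * σ = τ * x ∧ x * τ = σ * x ∧ x p = p := by
  classical
  have hσi : σ⁻¹ = σ := inv_eq_of_mul_eq_one_left hσ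
  have hτi : τ⁻¹ = τ := inv_eq_of_mul_eq_one_left hτ
  obtain ⟨r, hr⟩ : ∃ r, r = σ * τ := ⟨_, rfl⟩
  have hri : r⁻¹ = τ * σ := by rw [hr, mul_inv_rev, hσi, hτi]
  have c1 : ∀ i : ℤ, r ^ i * σ = σ * r ^ (-i) := by
    intro i
    have : SemiconjBy σ r⁻¹ r := by
      rw [SemiconjBy, hri, hr, ← mul_assoc]
    have := (this.zpow_right i).eq
    rw [zpow_neg, ← inv_zpow, this]
  have c2 : ∀ i : ℤ, r ^ i * τ = τ * r ^ (-i) := by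
    intro i
    have : SemiconjBy τ r⁻¹ r := by
      rw [SemiconjBy, hri, hr, ← mul_assoc, hτ, mul_assoc, hτ, one_mul, mul_one]
    have := (this.zpow_right i).eq
    rw [zpow_neg, ← inv_zpow, this]
  have hτr : τ = σ * r := by rw [hr, ← mul_assoc, hσ, one_mul]
  have nofix : ∀ (i : ℤ) a, (σ * r ^ i) a ≠ a := by
    intro i a ha
    rcases Int.even_or_odd' i with ⟨m, rfl | rfl⟩
    · apply fσ ((r ^ m) a)
      have : σ * r ^ (2 * m) = (r ^ m)⁻¹ * σ * r ^ m := by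
        rw [← zpow_neg, c1, neg_neg, mul_assoc, ← zpow_add, two_mul]
      rw [this] at ha
      have := congrArg (r ^ m) ha
      simpa using this
    · apply fτ ((r ^ m) a)
      have : σ * r ^ (2 * m + 1) = (r ^ m)⁻¹ * τ * r ^ m := by
        rw [← zpow_neg, c2, neg_neg, hτr, mul_assoc, mul_assoc, ← zpow_add, ← zpow_one_add]
        congr 2; ring
      rw [this] at ha
      have := congrArg (r ^ m) ha
      simpa using this
  let ψ : FreeGroup Bool →* Equiv.Perm α := FreeGroup.lift fun b => cond b σ τ
  let ψ' : FreeGroup Bool →* Equiv.Perm α := FreeGroup.lift fun b => cond b τ σ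
  let φ : FreeGroup Bool →* FreeGroup Bool := FreeGroup.lift fun b => FreeGroup.of (!b)
  have hφ : ∀ w, ψ (φ w) = ψ' w := by
    intro w
    refine DFunLike.congr_fun (?_ : ψ.comp φ = ψ') w
    ext b : 1
    cases b <;> simp [ψ, ψ', φ]
  have hφ' : ∀ w, ψ' (φ w) = ψ w := by
    intro w
    refine DFunLike.congr_fun (?_ : ψ'.comp φ = ψ) w
    ext b : 1
    cases b <;> simp [ψ, ψ', φ]
  have form : ∀ w, (∃ i : ℤ, ψ w = r ^ i ∧ ψ' w = r ^ (-i)) ∨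
      (∃ i : ℤ, ψ w = σ * r ^ i ∧ ψ' w = τ * r ^ (-i)) := by
    intro w
    have hof : ∀ b, (∃ i : ℤ, ψ (.of b) = σ * r ^ i ∧ ψ' (.of b) = τ * r ^ (-i)) := by
      intro b
      cases b
      · refine ⟨1, ?_, ?_⟩
        · simpa [ψ] using hτr
        · simp [ψ', hri, ← mul_assoc, hτ]
      · exact ⟨0, by simp [ψ], by simp [ψ']⟩
    induction w using FreeGroup.induction_on with
    | C1 => exact Or.inl ⟨0, by simp, by simp⟩
    | of b => exact Or.inr (hof b)
    | inv_of b _ =>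
      obtain ⟨i, h1, h2⟩ := hof b
      refine Or.inr ⟨i, ?_, ?_⟩
      · rw [map_inv, h1, mul_inv_rev, hσi, ← zpow_neg, c1, neg_neg]
      · rw [map_inv, h2, mul_inv_rev, hτi, ← zpow_neg, c2, neg_neg]
    | mul x y hx hy =>
      rcases hx with ⟨i, h1, h2⟩ | ⟨i, h1, h2⟩ <;> rcases hy with ⟨j, h3, h4⟩ | ⟨j, h3, h4⟩
      · refine Or.inl ⟨i + j, ?_, ?_⟩
        · rw [map_mul, h1, h3, zpow_add]
        · rw [map_mul, h2, h4, ← zpow_add]; congr 1; ring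
      · refine Or.inr ⟨-i + j, ?_, ?_⟩
        · rw [map_mul, h1, h3, ← mul_assoc, c1, mul_assoc, ← zpow_add]
        · rw [map_mul, h2, h4, ← mul_assoc, c2, mul_assoc, ← zpow_add]; congr 2; ring
      · refine Or.inr ⟨i + j, ?_, ?_⟩
        · rw [map_mul, h1, h3, mul_assoc, ← zpow_add]
        · rw [map_mul, h2, h4, mul_assoc, ← zpow_add]; congr 2; ring
      · refine Or.inl ⟨-i + j, ?_, ?_⟩
        · rw [map_mul, h1, h3, mul_assoc, ← mul_assoc (r ^ i), c1, mul_assoc, ← mul_assoc, hσ,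
            one_mul, ← zpow_add]
        · rw [map_mul, h2, h4, mul_assoc, ← mul_assoc (r ^ (-i)), c2, mul_assoc, ← mul_assoc, hτ,
            one_mul, ← zpow_add]; congr 1; ring
  have stab : ∀ w b, ψ w b = b → ψ' w b = b := by
    intro w b h
    rcases form w with ⟨i, h1, h2⟩ | ⟨i, h1, h2⟩
    · rw [h1] at h
      rw [h2, zpow_neg, Equiv.Perm.inv_eq_iff_eq, h]
    · rw [h1] at h
      exact absurd h (nofix i b)
  have wd : ∀ w w' b, ψ w b = ψ w' b → ψ' w b = ψ' w' b := by
    intro w w' b h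
    have := stab (w'⁻¹ * w) b (by rw [map_mul, map_inv, Equiv.Perm.mul_apply, h]; simp)
    rw [map_mul, map_inv, Equiv.Perm.mul_apply, Equiv.Perm.inv_eq_iff_eq] at this
    exact this
  let S : Setoid α :=
    { r := fun a b => ∃ w, ψ w a = b
      iseqv := ⟨fun a => ⟨1, by simp⟩, fun {a b} ⟨w, h⟩ => ⟨w⁻¹, by rw [← h]; simp⟩,
        fun {a b c} ⟨w, h⟩ ⟨w', h'⟩ => ⟨w' * w, by rw [map_mul, Equiv.Perm.mul_apply, h, h']⟩⟩ }
  let base : Quotient S → α := Function.update Quotient.out ⟦p⟧ p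
  have hbase : ∀ q, ⟦base q⟧ = q := by
    intro q
    by_cases hq : q = ⟦p⟧
    · subst hq; simp [base]
    · simp [base, hq]
  have hex : ∀ a, ∃ w, ψ w (base ⟦a⟧) = a := fun a => Quotient.exact (hbase ⟦a⟧)
  choose W hW using hex
  let f : α → α := fun a => ψ' (W a) (base ⟦a⟧)
  have hcl : ∀ w a, (⟦ψ w a⟧ : Quotient S) = ⟦a⟧ := fun w a => (Quotient.sound ⟨w, rfl⟩ : (⟦a⟧ : Quotient S) = ⟦ψ w a⟧).symm
  have hf : ∀ w a, f (ψ w (base ⟦a⟧)) = ψ' w (base ⟦a⟧) := by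
    intro w a
    have h1 : (⟦ψ w (base ⟦a⟧)⟧ : Quotient S) = ⟦a⟧ := by rw [hcl, hbase]
    have h2 := hW (ψ w (base ⟦a⟧))
    simp only [f]
    rw [h1] at h2 ⊢
    exact wd _ _ _ h2
  have hff : ∀ a, f (f a) = a := by
    intro a
    have : f a = ψ (φ (W a)) (base ⟦a⟧) := by rw [hφ]
    rw [this, hf, hφ', hW]
  have heq : ∀ u a, f (ψ u a) = ψ' u (f a) := by
    intro u a
    have h1 := hf (u * W a) a
    rw [map_mul, map_mul, Equiv.Perm.mul_apply, Equiv.Perm.mul_apply, hW] at h1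
    exact h1
  refine ⟨⟨f, f, hff, hff⟩, ?_, ?_, ?_⟩
  · ext a
    simpa [ψ, ψ'] using heq (.of true) a
  · ext a
    simpa [ψ, ψ'] using heq (.of false) a
  · have := hf 1 p
    simpa [base] using this

theorem double_coset {α : Type*} (τ : Equiv.Perm α) (hτ : τ * τ = 1) (fτ : ∀ a, τ a ≠ a)
    (p : α) (g : Equiv.Perm α) :
    ∃ x : Equiv.Perm α, x p = p ∧ (x * g) * τ = τ * (x * g) ∧ (g⁻¹ * x) * τ = τ * (g⁻¹ * x) := by
  obtain ⟨x, h1, h2, h3⟩ := swap_invol τ (g * τ * g⁻¹) hτ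
    (by
      have : g * τ * g⁻¹ * (g * τ * g⁻¹) = g * (τ * τ) * g⁻¹ := by group
      rw [this, hτ]; simp) fτ
    (by
      intro a h
      apply fτ (g⁻¹ a)
      have := congrArg (g⁻¹ : Equiv.Perm α) h
      simpa using this) p
  refine ⟨x, h3, ?_, ?_⟩
  · calc x * g * τ = (x * (g * τ * g⁻¹)) * g := by group
      _ = _ := by rw [h2, mul_assoc]
  · rw [mul_assoc, h1]; group

theorem exists_tau (k : ℕ) : ∃ τ : Equiv.Perm (Fin (2 * k)), τ * τ = 1 ∧ (∀ a, τ a ≠ a) ∧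
    ∀ i j : Fin (2 * k), (i : ℕ) / 2 = (j : ℕ) / 2 ↔ (j = i ∨ j = τ i) := by
  let f : Fin (2 * k) → Fin (2 * k) := fun i =>
    ⟨if (i : ℕ) % 2 = 0 then i + 1 else i - 1, by have := i.2; split <;> omega⟩
  have hf : ∀ i, f (f i) = i := by
    intro i
    apply Fin.ext
    simp only [f]
    split_ifs <;> omega
  refine ⟨⟨f, f, hf, hf⟩, ?_, ?_, ?_⟩
  · ext a; simp [hf]
  · intro a h
    have := congrArg Fin.val h
    simp only [f, Equiv.coe_fn_mk] at this
    split_ifs at this <;> omega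
  · intro i j
    simp only [Fin.ext_iff, f, Equiv.coe_fn_mk]
    split_ifs <;> omega

theorem mem_of_comm (k : ℕ) (τ g : Equiv.Perm (Fin (2 * k)))
    (h : ∀ i j : Fin (2 * k), (i : ℕ) / 2 = (j : ℕ) / 2 ↔ (j = i ∨ j = τ i))
    (hg : ∀ i, g (τ i) = τ (g i)) :
    g ∈ colorStab (fun i : Fin (2 * k) => (i : ℕ) / 2) := by
  intro i j
  change (i : ℕ) / 2 = (j : ℕ) / 2 ↔ ((g i : Fin (2 * k)) : ℕ) / 2 = ((g j : Fin (2 * k)) : ℕ) / 2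
  rw [h, h, ← hg, g.injective.eq_iff, g.injective.eq_iff]

theorem exists_option {α : Type*} (x : Equiv.Perm (Option α)) (hx : x none = none) :
    ∃ y : Equiv.Perm α, optionHom α y = x := by
  refine ⟨Equiv.removeNone x, ?_⟩
  ext1 a
  cases a with
  | none => exact hx.symm
  | some a =>
    change some (Equiv.removeNone x a) = _
    apply Equiv.removeNone_some
    rw [← Option.ne_none_iff_exists']
    intro h
    exact Option.some_ne_none a (x.injective (h.trans hx.symm))

theorem stmt9 (k : ℕ) (hk : 1 ≤ k) :
    IsMultFree (colorStab (fun i : Fin (2 * k) => (i : ℕ) / 2)) ∧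
      IsMultFree ((colorStab (fun i : Fin (2 * k) => (i : ℕ) / 2)).map
        (optionHom (Fin (2 * k)))) := by
  obtain ⟨τ, hτ, fτ, hc⟩ := exists_tau k
  constructor
  · apply gelfand
    intro g
    obtain ⟨x, -, h1, h2⟩ := double_coset τ hτ fτ ⟨0, by omega⟩ g
    have m1 := mem_of_comm k τ (x * g) hc (fun i => DFunLike.congr_fun h1 i)
    have m2 := mem_of_comm k τ (g⁻¹ * x) hc (fun i => DFunLike.congr_fun h2 i)
    exact ⟨(x * g)⁻¹, inv_mem m1, g⁻¹ * x, m2, by group⟩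
  · apply gelfand
    intro g
    have hττ : ∀ a, τ (τ a) = a := fun a => DFunLike.congr_fun hτ a
    let F : Option (Option (Fin (2 * k))) → Option (Option (Fin (2 * k)))
      | none => some none
      | some none => none
      | some (some a) => some (some (τ a))
    have hF : ∀ a, F (F a) = a := by
      rintro (_ | _ | a)
      · rfl
      · rfl
      · simp only [F, hττ]
    let T : Equiv.Perm (Option (Option (Fin (2 * k)))) := ⟨F, F, hF, hF⟩
    have hT : T * T = 1 := by ext1 a; exact hF a
    have fT : ∀ a, T a ≠ a := by
      rintro (_ | _ | a) h
      · exact Option.some_ne_none _ h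
      · exact Option.some_ne_none _ h.symm
      · exact fτ a (Option.some_injective _ (Option.some_injective _ h))
    obtain ⟨x', hx', h1, h2⟩ := double_coset T hT fT none (optionHom _ g)
    obtain ⟨x, rfl⟩ := exists_option x' hx'
    rw [← map_inv, ← map_mul] at h2
    rw [← map_mul] at h1
    have key : ∀ y : Equiv.Perm (Option (Fin (2 * k))), optionHom _ y * T = T * optionHom _ y →
        y ∈ (colorStab (fun i : Fin (2 * k) => (i : ℕ) / 2)).map (optionHom (Fin (2 * k))) := by
      intro y hy
      have hy0 : y none = none := Option.some_injective _ (DFunLike.congr_fun hy none)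
      obtain ⟨z, rfl⟩ := exists_option y hy0
      refine ⟨z, mem_of_comm k τ z hc fun i => ?_, rfl⟩
      exact Option.some_injective _ (Option.some_injective _
        (DFunLike.congr_fun hy (some (some i))))
    exact ⟨(x * g)⁻¹, inv_mem (key _ h1), g⁻¹ * x, key _ h2, by group⟩
end

section
/- Let k ≥ 1, let S_2≀S_k ≤ S_{2k} be the subgroup of permutations mapping each pair {2i−1,2i} (1 ≤ i ≤ k) to some pair {2j−1,2j}, and let H = A_{2k} ∩ (S_2≀S_k) be its subgroup of even permutations. Then the permutation character of S_{2k} on the cosets of H is multiplicity-free if and only if k is odd. Moreover, if k is odd then, regarding S_{2k} as the subgroup of S_{2k+1} fixing 2k+1, the permutation character of S_{2k+1} on the cosets of H is not multiplicity-free. -/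
open CategoryTheory in
theorem simple_inv {G : Type} [Group G] (V : FDRep ℂ G) (hV : Simple V) (p : Submodule ℂ V)
    (hp : ∀ g, ∀ v ∈ p, V.ρ g v ∈ p) : p = ⊥ ∨ p = ⊤ := by
  let σ : Representation ℂ G p :=
    { toFun := fun g => (V.ρ g).restrict (hp g)
      map_one' := by ext; simp
      map_mul' := by intro a b; ext; simp }
  let f : FDRep.of σ ⟶ V := ⟨InducedCategory.homMk (ModuleCat.ofHom p.subtype), fun g => by
    ext x; rfl⟩
  have hinj : Function.Injective f := Subtype.val_injective
  have : Mono f := ConcreteCategory.mono_of_injective f hinj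
  by_cases h : f = 0
  · left
    rw [eq_bot_iff]
    intro v hv
    have h1 : f (⟨v, hv⟩ : p) = (0 : FDRep.of σ ⟶ V) (⟨v, hv⟩ : p) := by rw [h]
    exact h1
  · right
    have : IsIso f := isIso_of_mono_of_nonzero h
    rw [eq_top_iff]
    intro v _
    have h2 : f ((inv f) v) = v := by
      have : (inv f ≫ f) v = v := by rw [IsIso.inv_hom_id]; rfl
      exact this
    rw [← h2]
    exact ((inv f) v : p).2

open CategoryTheory in
theorem simple_of {G : Type} [Group G] [Finite G] {W : Type} [AddCommGroup W] [Module ℂ W]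
    [Module.Finite ℂ W] [Nontrivial W] (ρ : Representation ℂ G W)
    (h : ∀ p : Submodule ℂ W, (∀ g, ∀ v ∈ p, ρ g v ∈ p) → p = ⊥ ∨ p = ⊤) :
    Simple (FDRep.of ρ) := by
  rw [FDRep.simple_iff_end_is_rank_one]
  have h1 : (𝟙 (FDRep.of ρ)) ≠ 0 := by
    intro h0
    obtain ⟨w, hw⟩ := exists_ne (0 : W)
    have : (𝟙 (FDRep.of ρ)) w = (0 : FDRep.of ρ ⟶ FDRep.of ρ) w := by rw [h0]
    exact hw this
  rw [finrank_eq_one_iff_of_nonzero' _ h1]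
  intro f
  let F : W →ₗ[ℂ] W := f.hom.hom.hom
  have hF : ∀ g w, F (ρ g w) = ρ g (F w) := by
    intro g w
    have := ConcreteCategory.congr_hom (f.comm g) w
    exact this
  obtain ⟨c, hc⟩ := Module.End.exists_eigenvalue F
  refine ⟨c, ?_⟩
  have := h (Module.End.eigenspace F c) (by
    intro g v hv
    rw [Module.End.mem_eigenspace_iff] at hv ⊢
    rw [hF, hv, map_smul])
  rcases this with h2 | h2
  · exact absurd h2 hc
  · ext w
    have h3 : w ∈ Module.End.eigenspace F c := by rw [h2]; trivial
    rw [Module.End.mem_eigenspace_iff] at h3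
    exact h3.symm

/-- a group algebra element killed by all irreps is zero -/
theorem faithful {G : Type} [Group G] [Fintype G] (a : MonoidAlgebra ℂ G)
    (h : ∀ V : FDRep ℂ G, CategoryTheory.Simple V → Representation.asAlgebraHom V.ρ a = 0) :
    a = 0 := by
  have key : ∀ S : Submodule (MonoidAlgebra ℂ G) (MonoidAlgebra ℂ G),
      IsSimpleModule (MonoidAlgebra ℂ G) S → ∀ s ∈ S, a * s = 0 := by
    intro S hS s hs
    have := IsSimpleModule.nontrivial (MonoidAlgebra ℂ G) S
    have : Module.Finite ℂ S := 
      inferInstanceAs (Module.Finite ℂ (S.restrictScalars ℂ))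
    let ρ : Representation ℂ G S := Representation.ofModule' S
    have hρ : ∀ b : MonoidAlgebra ℂ G, ∀ s : S, Representation.asAlgebraHom ρ b s = b • s := by
      intro b s
      simp [ρ, Representation.asAlgebraHom, Representation.ofModule']
    have hsimp : CategoryTheory.Simple (FDRep.of ρ) := by
      apply simple_of
      intro p hp
      let q : Submodule (MonoidAlgebra ℂ G) S :=
        { p with
          smul_mem' := by
            intro c x hx
            rw [← hρ c x]
            induction c using MonoidAlgebra.induction_linear with
            | zero => simp
            | add f g hf hg =>
              rw [map_add]
              exact p.add_mem hf hg
            | single g r =>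
              rw [Representation.asAlgebraHom_single]
              exact p.smul_mem _ (hp g x hx) }
      rcases eq_bot_or_eq_top q with h1 | h1
      · left
        ext x
        have : x ∈ p ↔ x ∈ (⊥ : Submodule (MonoidAlgebra ℂ G) S) := by
          change x ∈ q ↔ _; rw [h1]
        simpa using this
      · right
        ext x
        have : x ∈ p ↔ x ∈ (⊤ : Submodule (MonoidAlgebra ℂ G) S) := by
          change x ∈ q ↔ _; rw [h1]
        simpa using this
    have h2 := h _ hsimp
    have h3 := hρ a ⟨s, hs⟩
    have h4 : Representation.asAlgebraHom ρ a = 0 := h2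
    rw [h4] at h3
    have := congrArg Subtype.val h3
    simpa using this.symm
  have htop := IsSemisimpleModule.sSup_simples_eq_top (MonoidAlgebra ℂ G) (MonoidAlgebra ℂ G)
  have h1 : (1 : MonoidAlgebra ℂ G) ∈ sSup {m : Submodule (MonoidAlgebra ℂ G) (MonoidAlgebra ℂ G) |
      IsSimpleModule (MonoidAlgebra ℂ G) m} := by rw [htop]; trivial
  have : ∀ x ∈ sSup {m : Submodule (MonoidAlgebra ℂ G) (MonoidAlgebra ℂ G) |
      IsSimpleModule (MonoidAlgebra ℂ G) m}, a * x = 0 := by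
    intro x hx
    rw [sSup_eq_iSup'] at hx
    induction hx using Submodule.iSup_induction' with
    | mem i x hx => exact key i.1 i.2 x hx
    | zero => simp
    | add x y _ _ hx hy => rw [mul_add, hx, hy, add_zero]
  simpa using this 1 h1

theorem mf_of_inv {G : Type} [Group G] [Fintype G] (H : Subgroup G)
    (hH : ∀ g : G, ∃ a ∈ H, ∃ b ∈ H, g⁻¹ = a * g * b) : IsMultFree H := by
  classical
  intro V hV
  set W := Representation.invariants (V.ρ.comp H.subtype) with hWdef
  have hW : ∀ w : V, w ∈ W ↔ ∀ h ∈ H, V.ρ h w = w := by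
    intro w
    rw [hWdef, Representation.mem_invariants]
    exact ⟨fun h x hx => h ⟨x, hx⟩, fun h x => h x.1 x.2⟩
  let E : V →ₗ[ℂ] V := ∑ h : H, V.ρ h
  have hE : ∀ v, E v = ∑ h : H, V.ρ h v := by
    intro v
    simp [E]
  have hEmem : ∀ v, E v ∈ W := by
    intro v
    rw [hW]
    intro h hh
    rw [hE, map_sum]
    refine Fintype.sum_equiv (Equiv.mulLeft (⟨h, hh⟩ : H)) _ _ ?_
    intro x
    simp
  have hEl : ∀ h ∈ H, ∀ v, E (V.ρ h v) = E v := by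
    intro h hh v
    rw [hE, hE]
    refine Fintype.sum_equiv (Equiv.mulRight (⟨h, hh⟩ : H)) _ _ ?_
    intro x
    simp
  have hEW : ∀ w ∈ W, E w = (Fintype.card H : ℂ) • w := by
    intro w hw
    rw [hE, Finset.sum_congr rfl (fun h _ => (hW w).1 hw h.1 h.2)]
    simp [Nat.cast_smul_eq_nsmul]
  have hcard : (Fintype.card H : ℂ) ≠ 0 := by
    exact_mod_cast Fintype.card_ne_zero
  have hA : ∀ x : G, ∀ w ∈ W, E (V.ρ x⁻¹ w) = E (V.ρ x w) := by
    intro x w hw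
    obtain ⟨a, ha, b, hb, hab⟩ := hH x
    rw [hab, map_mul, map_mul, Module.End.mul_apply, Module.End.mul_apply, (hW w).1 hw b hb,
      hEl a ha]
  have hTT : ∀ x y : G, ∀ w, E (V.ρ x (E (V.ρ y w))) = ∑ h : H, E (V.ρ (x * h * y) w) := by
    intro x y w
    rw [hE (V.ρ y w), map_sum, map_sum]
    simp
  have hcomm : ∀ x y : G, ∀ w ∈ W, E (V.ρ x (E (V.ρ y w))) = E (V.ρ y (E (V.ρ x w))) := by
    intro x y w hw
    rw [hTT, ← hA x w hw, ← hA y _ (hEmem _), hTT]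
    refine Fintype.sum_equiv (Equiv.inv H) _ _ ?_
    intro h
    rw [← hA _ w hw]
    simp [mul_assoc]
  -- cyclicity
  have hcyc : ∀ w ∈ W, w ≠ 0 → ∀ p : Submodule ℂ V, (∀ x, E (V.ρ x w) ∈ p) → W ≤ p := by
    intro w hw hw0 p hp
    have h1 := simple_inv V hV (Submodule.span ℂ (Set.range fun x => V.ρ x w)) (by
      intro g v hv
      induction hv using Submodule.span_induction with
      | mem v hv =>
        obtain ⟨x, rfl⟩ := hv
        apply Submodule.subset_span
        exact ⟨g * x, by simp⟩
      | zero => simp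
      | add x y _ _ hx hy => rw [map_add]; exact Submodule.add_mem _ hx hy
      | smul c x _ hx => rw [map_smul]; exact Submodule.smul_mem _ _ hx)
    have h2 : Submodule.span ℂ (Set.range fun x => V.ρ x w) = ⊤ := by
      rcases h1 with h1 | h1
      · exfalso
        apply hw0
        have : w ∈ Submodule.span ℂ (Set.range fun x => V.ρ x w) :=
          Submodule.subset_span ⟨1, by simp⟩
        rw [h1] at this
        simpa using this
      · exact h1
    have h3 : ∀ v : V, E v ∈ p := by
      intro v
      have hv : v ∈ Submodule.span ℂ (Set.range fun x => V.ρ x w) := by rw [h2]; trivial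
      induction hv using Submodule.span_induction with
      | mem v hv => obtain ⟨x, rfl⟩ := hv; exact hp x
      | zero => simp
      | add x y _ _ hx hy => rw [map_add]; exact Submodule.add_mem _ hx hy
      | smul c x _ hx => rw [map_smul]; exact Submodule.smul_mem _ _ hx
    intro u hu
    have h4 := h3 u
    rw [hEW u hu] at h4
    exact (Submodule.smul_mem_iff p hcard).1 h4
  by_cases hbot : ∀ w ∈ W, w = 0
  · have : W = ⊥ := by
      rw [eq_bot_iff]; intro w hw; simpa using hbot w hw
    rw [this]; simp
  push Not at hbot
  obtain ⟨v, hvW, hv0⟩ := hbot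
  have hscal : ∀ x : G, ∃ c : ℂ, ∀ w ∈ W, E (V.ρ x w) = c • w := by
    intro x
    let T : W →ₗ[ℂ] W := (E ∘ₗ V.ρ x).restrict (fun w _ => hEmem _)
    have : Nontrivial W := ⟨⟨⟨v, hvW⟩, 0, by simpa using hv0⟩⟩
    obtain ⟨c, hc⟩ := Module.End.exists_eigenvalue T
    obtain ⟨u, hu⟩ := hc.exists_hasEigenvector
    have hu1 : E (V.ρ x u) = c • (u : V) := congrArg Subtype.val hu.apply_eq_smul
    have hu0 : (u : V) ≠ 0 := by simpa using hu.2
    refine ⟨c, fun w hw => ?_⟩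
    have := hcyc u u.2 hu0 (LinearMap.ker (E ∘ₗ V.ρ x - c • LinearMap.id)) (by
      intro y
      simp only [LinearMap.mem_ker, LinearMap.sub_apply, LinearMap.comp_apply,
        LinearMap.smul_apply, LinearMap.id_apply]
      rw [hcomm x y u u.2, hu1]
      simp) hw
    simp only [LinearMap.mem_ker, LinearMap.sub_apply, LinearMap.comp_apply,
        LinearMap.smul_apply, LinearMap.id_apply] at this
    exact sub_eq_zero.1 this
  have hle : W ≤ Submodule.span ℂ {v} := by
    apply hcyc v hvW hv0
    intro x
    obtain ⟨c, hc⟩ := hscal x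
    rw [hc v hvW]
    exact Submodule.smul_mem _ _ (Submodule.mem_span_singleton_self v)
  calc Module.finrank ℂ W ≤ Module.finrank ℂ (Submodule.span ℂ {v}) :=
        Submodule.finrank_mono hle
    _ ≤ 1 := by rw [finrank_span_singleton hv0]

theorem not_mf {G : Type} [Group G] [Fintype G] (H B : Subgroup G) (s : G →* ℤˣ)
    (hHB : H ≤ B) (hs : ∀ h ∈ H, s h = 1) (b₀ : G) (hb₀ : b₀ ∈ B) (hsb : s b₀ = -1)
    (g : G) (hg : ∀ x ∈ B, g⁻¹ * x * g ∈ B → s x = 1) : ¬ IsMultFree H := by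
  classical
  intro hmf
  let c : G → ℂ := fun b => ((s b : ℤ) : ℂ)
  have hcm : ∀ x y, c (x * y) = c x * c y := by intro x y; simp [c]
  have hc2 : ∀ x, c x * c x = 1 := by
    intro x
    rcases Int.units_eq_one_or (s x) with h | h <;> simp [c, h]
  let a : MonoidAlgebra ℂ G := ∑ b : B, ∑ b' : B, MonoidAlgebra.single ((b : G) * g * b') (c b)
  have ha : a = 0 := by
    apply faithful
    intro V hV
    ext u
    let v : V := ∑ b' : B, V.ρ b' u
    let w : V := ∑ b : B, c b • V.ρ b (V.ρ g v)
    have hau : Representation.asAlgebraHom V.ρ a u = w := by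
      simp only [a, w, v, map_sum, Representation.asAlgebraHom_single, LinearMap.sum_apply,
        LinearMap.smul_apply, map_mul, Module.End.mul_apply, Finset.smul_sum]
    rw [hau]
    change w = 0
    have hv : ∀ x ∈ B, V.ρ x v = v := by
      intro x hx
      simp only [v]
      rw [map_sum]
      refine Fintype.sum_equiv (Equiv.mulLeft (⟨x, hx⟩ : B)) _ _ ?_
      intro y
      simp
    have hw : ∀ x ∈ B, V.ρ x w = c x • w := by
      intro x hx
      simp only [w]
      rw [map_sum, Finset.smul_sum]
      refine Fintype.sum_equiv (Equiv.mulLeft (⟨x, hx⟩ : B)) _ _ ?_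
      intro y
      simp only [Equiv.coe_mulLeft, Subgroup.coe_mul, hcm, map_smul, map_mul, Module.End.mul_apply,
        smul_smul]
      rw [← mul_assoc, hc2, one_mul]
    by_contra hw0
    have hv0 : v ≠ 0 := by
      intro hv0
      apply hw0
      simp [w, hv0]
    have hmem : ∀ z : V, (∀ h ∈ H, V.ρ h z = z) →
        z ∈ Representation.invariants (V.ρ.comp H.subtype) := by
      intro z hz
      rw [Representation.mem_invariants]
      intro h
      exact hz h.1 h.2
    have hvm := hmem v (fun h hh => hv h (hHB hh))
    have hwm := hmem w (fun h hh => by rw [hw h (hHB hh)]; simp [c, hs h hh])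
    obtain ⟨e, he⟩ := finrank_le_one_iff.1 (hmf V hV)
    obtain ⟨c1, h1⟩ := he ⟨v, hvm⟩
    obtain ⟨c2, h2⟩ := he ⟨w, hwm⟩
    have h1' : c1 • (e : V) = v := congrArg Subtype.val h1
    have h2' : c2 • (e : V) = w := congrArg Subtype.val h2
    have hc1 : c1 ≠ 0 := by rintro rfl; apply hv0; rw [← h1']; simp
    have h3 : w = (c2 / c1) • v := by
      rw [← h1', ← h2', smul_smul, div_mul_cancel₀ _ hc1]
    have h4 : V.ρ b₀ w = w := by rw [h3, map_smul, hv b₀ hb₀]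
    rw [hw b₀ hb₀] at h4
    have h5 : c b₀ = -1 := by simp [c, hsb]
    rw [h5, neg_smul, one_smul] at h4
    have h6 : (2 : ℂ) • w = 0 := by
      rw [two_smul]
      nth_rw 1 [← h4]
      simp
    rcases smul_eq_zero.1 h6 with h7 | h7
    · norm_num at h7
    · exact hw0 h7
  have hcoef : a.coeff g = ((∑ b : B, ∑ b' : B, if (b : G) * g * b' = g then 1 else 0 : ℕ) : ℂ) := by
    have : a.coeff g =
        ∑ b : B, ∑ b' : B, (MonoidAlgebra.single ((b : G) * g * b') (c b)).coeff g := by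
      simp only [a, MonoidAlgebra.coeff_sum, Finsupp.finsetSum_apply]
    rw [this]
    push_cast
    refine Finset.sum_congr rfl fun b _ => Finset.sum_congr rfl fun b' _ => ?_
    rw [MonoidAlgebra.coeff_single, Finsupp.single_apply]
    split_ifs with h
    · have : s b = 1 := by
        apply hg b b.2
        have : g⁻¹ * b * g = (b' : G)⁻¹ := by
          rw [eq_inv_iff_mul_eq_one]
          calc g⁻¹ * b * g * b' = g⁻¹ * (b * g * b') := by group
            _ = 1 := by rw [h]; group
        rw [this]
        exact B.inv_mem b'.2
      simp [c, this]
    · rfl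
  rw [ha] at hcoef
  have h0 : (∑ b : B, ∑ b' : B, if (b : G) * g * b' = g then 1 else 0 : ℕ) = 0 := by
    have : (0 : ℂ) = ((∑ b : B, ∑ b' : B, if (b : G) * g * b' = g then 1 else 0 : ℕ) : ℂ) := hcoef
    exact_mod_cast this.symm
  rw [Finset.sum_eq_zero_iff] at h0
  have h1 := h0 1 (Finset.mem_univ _)
  rw [Finset.sum_eq_zero_iff] at h1
  have h2 := h1 1 (Finset.mem_univ _)
  simp at h2

open Equiv Equiv.Perm in
theorem bipart {α : Type} [Fintype α] [DecidableEq α] (τ σ : Perm α) (hτ2 : ∀ i, τ (τ i) = i)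
    (hσ2 : ∀ i, σ (σ i) = i) (hτ : ∀ i, τ i ≠ i) (hσ : ∀ i, σ i ≠ i) :
    ∃ E : α → Prop, (∀ i, E (τ i) ↔ ¬ E i) ∧ ∀ i, E (σ i) ↔ ¬ E i := by
  classical
  let r : Perm α := τ * σ
  have hsemi : SemiconjBy τ r r⁻¹ := by
    change τ * r = r⁻¹ * τ
    rw [eq_inv_mul_iff_mul_eq]
    ext i
    simp [r, hτ2, hσ2]
  have hz : ∀ (n : ℤ) i, τ ((r ^ n) i) = (r ^ n)⁻¹ (τ i) := by
    intro n i
    have h := hsemi.zpow_right n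
    rw [inv_zpow] at h
    exact congrArg (fun f : Perm α => f i) h.eq
  have hns : ∀ i, ¬ SameCycle r i (τ i) := by
    rintro i ⟨m, hm⟩
    rcases Int.even_or_odd' m with ⟨n, rfl | rfl⟩
    · rw [two_mul, zpow_add, Perm.mul_apply] at hm
      apply hτ ((r ^ n) i)
      rw [hz, ← hm]
      simp
    · have h2 : 2 * n + 1 = n + (1 + n) := by ring
      rw [h2, zpow_add, zpow_add, zpow_one, Perm.mul_apply, Perm.mul_apply] at hm
      have h3 : r ((r ^ n) i) = τ ((r ^ n) i) := by
        rw [hz, ← hm]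
        simp
      apply hσ ((r ^ n) i)
      exact τ.injective h3
  let e := Finite.equivFin (Quotient (SameCycle.setoid r))
  let f : α → ℕ := fun i => e (Quotient.mk _ i)
  have hf : ∀ i j, f i = f j ↔ SameCycle r i j := by
    intro i j
    simp only [f]
    rw [Fin.val_inj, e.injective.eq_iff, Quotient.eq]
    rfl
  have h1 : ∀ i, f i ≠ f (τ i) := fun i h => hns i ((hf _ _).1 h)
  have h2 : ∀ i, f (τ (σ i)) = f i := by
    intro i
    rw [hf]
    exact ⟨-1, by simp [r]⟩
  have h3 : ∀ i, f (σ i) = f (τ i) := by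
    intro i
    rw [hf]
    exact ⟨1, by simp [r, hσ2]⟩
  refine ⟨fun i => f i < f (τ i), fun i => ?_, fun i => ?_⟩
  · have := h1 i
    simp only [hτ2]
    omega
  · have := h1 i
    simp only [h2, h3]
    omega

open Equiv Equiv.Perm in
theorem swap_exists {α : Type} [Fintype α] [DecidableEq α] (τ σ : Perm α)
    (hτ2 : ∀ i, τ (τ i) = i)
    (hσ2 : ∀ i, σ (σ i) = i) (hτ : ∀ i, τ i ≠ i) (hσ : ∀ i, σ i ≠ i) (hs : sign τ = -1) (s : ℤˣ) :
    ∃ y : Perm α, y * τ = σ * y ∧ y * σ = τ * y ∧ sign y = s := by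
  classical
  obtain ⟨E, hEτ, hEσ⟩ := bipart τ σ hτ2 hσ2 hτ hσ
  let r : Perm α := τ * σ
  have hEr : ∀ i, E (r i) ↔ E i := by
    intro i
    simp only [r, Perm.mul_apply]
    rw [hEτ, hEσ, not_not]
  let ρ : Perm {i // E i} := r.subtypePerm hEr
  have hconj : IsConj ρ ρ⁻¹ := by
    rw [isConj_iff_cycleType_eq, cycleType_inv]
  obtain ⟨π, hπ⟩ := isConj_iff.1 hconj
  let p : Perm α := ofSubtype π
  let q : Perm α := ofSubtype ρ
  have hpq : ∀ i, q (p (q i)) = p i := by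
    have h1 : p * q * p⁻¹ = q⁻¹ := by
      simp only [p, q]
      rw [← map_inv, ← map_mul, ← map_inv, ← map_mul, hπ]
    have h2 : q * (p * q) = p := by
      rw [mul_inv_eq_iff_eq_mul] at h1
      rw [h1]; group
    intro i
    exact congrArg (fun f : Perm α => f i) h2
  have hpn : ∀ i, ¬ E i → p i = i := fun i hi => ofSubtype_apply_of_not_mem π hi
  have hqn : ∀ i, ¬ E i → q i = i := fun i hi => ofSubtype_apply_of_not_mem ρ hi
  have hpE : ∀ i, E i → E (p i) := fun i hi => by
    simp only [p]
    rw [ofSubtype_apply_of_mem π hi]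
    exact (π ⟨i, hi⟩).2
  have hq : ∀ i, E i → q i = τ (σ i) := fun i hi => by
    simp only [q]
    rw [ofSubtype_apply_of_mem ρ hi]
    rfl
  have hqE : ∀ i, E i → E (q i) := fun i hi => by
    rw [hq i hi]
    exact (hEr i).2 hi
  have hσe : ∀ i, E i → σ i = τ (q i) := fun i hi => by rw [hq i hi, hτ2]
  have hστ : ∀ i, E i → σ (τ (q i)) = i := fun i hi => by rw [hq i hi, hτ2, hσ2]
  have hqs : ∀ i, E i → ∃ u, E u ∧ q u = i := fun i hi => by
    refine ⟨σ (τ i), ?_, ?_⟩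
    · rw [hEσ, hEτ, not_not]; exact hi
    · rw [hq _ (by rw [hEσ, hEτ, not_not]; exact hi), hσ2, hτ2]
  have hτn : ∀ i, E i → ¬ E (τ i) := fun i hi => by rw [hEτ, not_not]; exact hi
  have hext : ∀ f g : Perm α, (∀ i, E i → f i = g i) → (∀ u, E u → f (τ (q u)) = g (τ (q u))) →
      f = g := by
    intro f g h1 h2
    ext i
    by_cases hi : E i
    · exact h1 i hi
    · obtain ⟨u, hu, hui⟩ := hqs (τ i) ((hEτ i).2 hi)
      have := h2 u hu
      rwa [hui, hτ2] at this
  let y : Perm α := τ * q * p * τ * p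
  let x : Perm α := τ * p * τ * p * τ
  have hy1 : ∀ i, E i → y i = p i := by
    intro i hi
    simp only [y, Perm.mul_apply]
    rw [hpn _ (hτn _ (hpE i hi)), hqn _ (hτn _ (hpE i hi)), hτ2]
  have hy2 : ∀ i, E i → y (τ i) = τ (q (p i)) := by
    intro i hi
    simp only [y, Perm.mul_apply]
    rw [hpn _ (hτn _ hi), hτ2]
  have hx1 : ∀ i, E i → x i = τ (p i) := by
    intro i hi
    simp only [x, Perm.mul_apply]
    rw [hpn _ (hτn _ hi), hτ2]
  have hx2 : ∀ i, E i → x (τ i) = p i := by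
    intro i hi
    simp only [x, Perm.mul_apply]
    rw [hτ2, hpn _ (hτn _ (hpE _ hi)), hτ2]
  have A1 : y * τ = σ * y := by
    apply hext
    · intro i hi
      simp only [Perm.mul_apply]
      rw [hy2 i hi, hy1 i hi, hσe _ (hpE i hi)]
    · intro u hu
      simp only [Perm.mul_apply]
      rw [hτ2, hy2 _ (hqE u hu), hy1 _ (hqE u hu), hστ _ (hpE _ (hqE u hu))]
  have A2 : y * σ = τ * y := by
    apply hext
    · intro i hi
      simp only [Perm.mul_apply]
      rw [hσe i hi, hy2 _ (hqE i hi), hy1 i hi, hpq]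
    · intro u hu
      simp only [Perm.mul_apply]
      rw [hστ u hu, hy2 _ (hqE u hu), hτ2, hy1 u hu, hpq]
  have B1 : x * τ = τ * x := by
    apply hext
    · intro i hi
      simp only [Perm.mul_apply]
      rw [hx2 i hi, hx1 i hi, hτ2]
    · intro u hu
      simp only [Perm.mul_apply]
      rw [hτ2, hx2 _ (hqE u hu), hx1 _ (hqE u hu)]
  have B2 : x * σ = σ * x := by
    apply hext
    · intro i hi
      simp only [Perm.mul_apply]
      rw [hσe i hi, hx2 _ (hqE i hi), hx1 i hi, ← hpq i, hστ _ (hpE _ (hqE i hi))]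
    · intro u hu
      simp only [Perm.mul_apply]
      rw [hστ u hu, hx2 _ (hqE u hu), hx1 u hu, hσe _ (hpE _ (hqE u hu)), hpq]
  have hsx : sign x = -1 := by
    simp only [x, Equiv.Perm.sign_mul, hs]
    rcases Int.units_eq_one_or (sign p) with h | h <;> simp [h]
  by_cases h : sign y = s
  · exact ⟨y, A1, A2, h⟩
  · refine ⟨y * x, ?_, ?_, ?_⟩
    · rw [mul_assoc, B1, ← mul_assoc, A1, mul_assoc]
    · rw [mul_assoc, B2, ← mul_assoc, A2, mul_assoc]
    · rw [Equiv.Perm.sign_mul, hsx]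
      clear_value x y
      revert h
      generalize sign y = t
      revert t s
      decide

open Equiv Equiv.Perm in
theorem even_of_pres {α : Type} [Fintype α] [DecidableEq α] (τ x : Perm α)
    (hτ2 : ∀ i, τ (τ i) = i) (E : α → Prop) (hEτ : ∀ i, E (τ i) ↔ ¬ E i)
    (hx : ∀ i, x (τ i) = τ (x i)) (hEx : ∀ i, E (x i) ↔ E i) : sign x = 1 := by
  classical
  let p : Perm α := ofSubtype (x.subtypePerm hEx)
  have hpn : ∀ i, ¬ E i → p i = i := fun i hi => ofSubtype_apply_of_not_mem _ hi
  have hp : ∀ i, E i → p i = x i := fun i hi => by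
    simp only [p]
    rw [ofSubtype_apply_of_mem _ hi]
    rfl
  have : x = p * (τ * p * τ) := by
    ext i
    simp only [Perm.mul_apply]
    by_cases hi : E i
    · rw [hpn (τ i) (by rw [hEτ, not_not]; exact hi), hτ2, hp i hi]
    · have h1 : E (τ i) := (hEτ i).2 hi
      rw [hp _ h1, hx, hτ2, hpn]
      rw [hEx]; exact hi
  rw [this]
  simp only [Equiv.Perm.sign_mul]
  rcases Int.units_eq_one_or (sign p) with h | h <;>
    rcases Int.units_eq_one_or (sign τ) with h' | h' <;> simp [h, h']

/-- partner involution -/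
def tauF (k : ℕ) : Equiv.Perm (Fin (2 * k)) where
  toFun i := ⟨if (i : ℕ) % 2 = 0 then i + 1 else i - 1, by split_ifs <;> omega⟩
  invFun i := ⟨if (i : ℕ) % 2 = 0 then i + 1 else i - 1, by split_ifs <;> omega⟩
  left_inv i := by ext; dsimp only; split_ifs <;> omega
  right_inv i := by ext; dsimp only; split_ifs <;> omega

theorem tauF_val (k : ℕ) (i : Fin (2 * k)) :
    (tauF k i : ℕ) = if (i : ℕ) % 2 = 0 then (i : ℕ) + 1 else i - 1 := rfl

theorem tauF_tauF (k : ℕ) (i : Fin (2 * k)) : tauF k (tauF k i) = i := (tauF k).left_inv i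

theorem tauF_ne (k : ℕ) (i : Fin (2 * k)) : tauF k i ≠ i := by
  intro h
  have := congrArg Fin.val h
  rw [tauF_val] at this
  split_ifs at this <;> omega

theorem tauF_sq (k : ℕ) : tauF k * tauF k = 1 := by
  ext i; simp [tauF_tauF]

theorem sign_tauF (k : ℕ) : Equiv.Perm.sign (tauF k) = (-1) ^ k := by
  rw [Equiv.Perm.sign_of_pow_two_eq_one (by rw [pow_two, tauF_sq])]
  have : IsEmpty (Function.fixedPoints (tauF k)) := ⟨fun i => tauF_ne k i.1 i.2⟩
  rw [Fintype.card_eq_zero (α := Function.fixedPoints (tauF k))]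
  simp

theorem mem_colorStab_iff (k : ℕ) (x : Equiv.Perm (Fin (2 * k))) :
    x ∈ colorStab (fun i : Fin (2 * k) => (i : ℕ) / 2) ↔ ∀ i, x (tauF k i) = tauF k (x i) := by
  have hc : ∀ i j : Fin (2 * k), (i : ℕ) / 2 = (j : ℕ) / 2 ↔ (i = j ∨ j = tauF k i) := by
    intro i j
    rw [Fin.ext_iff, Fin.ext_iff, tauF_val]
    split_ifs <;> omega
  change (∀ i j : Fin (2 * k), (i : ℕ) / 2 = (j : ℕ) / 2 ↔
    ((x i : Fin (2 * k)) : ℕ) / 2 = ((x j : Fin (2 * k)) : ℕ) / 2) ↔ _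
  simp only [hc]
  constructor
  · intro h i
    rcases (h i (tauF k i)).1 (Or.inr rfl) with h1 | h1
    · exact absurd (x.injective h1).symm (tauF_ne k i)
    · exact h1
  · intro h i j
    rw [← h, x.injective.eq_iff, x.injective.eq_iff]

theorem rot_val (n : ℕ) (i : Fin n) (h : (i : ℕ) + 1 < n) : (finRotate n i : ℕ) = i + 1 := by
  obtain ⟨m, rfl⟩ : ∃ m, n = m + 1 := ⟨n - 1, by omega⟩
  rw [coe_finRotate_of_ne_last]
  intro h'
  rw [h'] at h
  simp at h

theorem rot_val' (n : ℕ) (i : Fin n) (h : (i : ℕ) + 1 = n) : (finRotate n i : ℕ) = 0 := by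
  obtain ⟨m, rfl⟩ : ∃ m, n = m + 1 := ⟨n - 1, by omega⟩
  have : i = Fin.last m := by ext; simp; omega
  rw [this, finRotate_last]
  rfl

theorem odd_mf (k : ℕ) (hk : Odd k) : IsMultFree ((colorStab (fun i : Fin (2 * k) => (i : ℕ) / 2)) ⊓
        alternatingGroup (Fin (2 * k))) := by
  apply mf_of_inv
  intro g
  let τ := tauF k
  let σ := g * τ * g⁻¹
  have hsτ : Equiv.Perm.sign τ = -1 := by
    rw [sign_tauF, hk.neg_one_pow]
  obtain ⟨y, h1, h2, h3⟩ := swap_exists τ σ (tauF_tauF k)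
    (by intro i; simp [σ, τ, tauF_tauF]) (tauF_ne k)
    (by
      intro i h
      apply tauF_ne k (g⁻¹ i)
      apply g.injective
      simpa [σ, τ] using h) hsτ (Equiv.Perm.sign g)
  have e1 : g⁻¹ * σ = τ * g⁻¹ := by simp only [σ]; group
  have e2 : y⁻¹ * τ = σ * y⁻¹ := by
    rw [inv_mul_eq_iff_eq_mul, ← mul_assoc, h2]; group
  have mem : ∀ b : Equiv.Perm (Fin (2 * k)), b * τ = τ * b → Equiv.Perm.sign b = 1 →
      b ∈ (colorStab (fun i : Fin (2 * k) => (i : ℕ) / 2)) ⊓ alternatingGroup (Fin (2 * k)) := by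
    intro b hb hs
    refine Subgroup.mem_inf.2 ⟨(mem_colorStab_iff k b).2 fun i => ?_, ?_⟩
    · exact congrArg (fun f : Equiv.Perm (Fin (2 * k)) => f i) hb
    · rwa [Equiv.Perm.mem_alternatingGroup]
  refine ⟨g⁻¹ * y⁻¹, mem _ ?_ ?_, g⁻¹ * y, mem _ ?_ ?_, by group⟩
  · rw [mul_assoc, e2, ← mul_assoc, e1, mul_assoc]
  · simp [h3]
  · rw [mul_assoc, h1, ← mul_assoc, e1, mul_assoc]
  · simp [h3]

theorem swap_mem (k : ℕ) (i : Fin (2 * k)) : Equiv.swap i (tauF k i) ∈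
    colorStab (fun i : Fin (2 * k) => (i : ℕ) / 2) := by
  rw [mem_colorStab_iff]
  intro j
  have h := Equiv.mul_swap_eq_swap_mul (tauF k) i (tauF k i)
  rw [tauF_tauF, Equiv.swap_comm (tauF k i) i] at h
  exact (congrArg (fun f : Equiv.Perm (Fin (2 * k)) => f j) h).symm

theorem even_not_mf (k : ℕ) (hk1 : 1 ≤ k) (hk : Even k) :
    ¬ IsMultFree ((colorStab (fun i : Fin (2 * k) => (i : ℕ) / 2)) ⊓
        alternatingGroup (Fin (2 * k))) := by
  apply not_mf _ (colorStab (fun i : Fin (2 * k) => (i : ℕ) / 2)) Equiv.Perm.sign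
    inf_le_left (fun h hh => by
      have := (Subgroup.mem_inf.1 hh).2
      rwa [Equiv.Perm.mem_alternatingGroup] at this)
    (Equiv.swap ⟨0, by omega⟩ (tauF k ⟨0, by omega⟩)) (swap_mem k _)
    (Equiv.Perm.sign_swap (tauF_ne k _).symm) (finRotate (2 * k))
  intro x hx hy
  rw [mem_colorStab_iff] at hx hy
  set g := finRotate (2 * k) with hg
  set y := g⁻¹ * x * g with hydef
  have hxy : ∀ i, x (g i) = g (y i) := by intro i; simp [hydef]
  have pτ : ∀ i, (tauF k i : ℕ) % 2 = 0 ↔ ¬ (i : ℕ) % 2 = 0 := by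
    intro i
    rw [tauF_val]
    split_ifs <;> omega
  have pg : ∀ i, (g i : ℕ) % 2 = 0 ↔ ¬ (i : ℕ) % 2 = 0 := by
    intro i
    by_cases h : (i : ℕ) + 1 < 2 * k
    · rw [hg, rot_val _ _ h]; omega
    · rw [hg, rot_val' _ _ (by omega)]; omega
  have hpar : ∀ m (h : 2 * m < 2 * k),
      ((x ⟨2 * m, h⟩ : ℕ) % 2 = 0 ↔ (x ⟨0, by omega⟩ : ℕ) % 2 = 0) := by
    intro m
    induction m with
    | zero => intro h; rfl
    | succ m ih =>
      intro h
      rw [← ih (by omega)]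
      have t1 : tauF k ⟨2 * m, by omega⟩ = ⟨2 * m + 1, by omega⟩ := by
        ext; rw [tauF_val]; simp
      have g1 : g ⟨2 * m, by omega⟩ = ⟨2 * m + 1, by omega⟩ := by
        ext; rw [hg, rot_val _ _ (by simp; omega)]
      have g2 : g ⟨2 * m + 1, by omega⟩ = ⟨2 * (m + 1), by omega⟩ := by
        ext; rw [hg, rot_val _ _ (by simp; omega)]; simp; omega
      have a1 := hx ⟨2 * m, by omega⟩
      rw [t1, ← g1, hxy] at a1
      have a2 := hy ⟨2 * m, by omega⟩
      have a3 := hxy ⟨2 * m + 1, by omega⟩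
      rw [g2, ← t1, a2] at a3
      rw [a3, pg, pτ, not_not]
      have b1 := pg (y ⟨2 * m, by omega⟩)
      rw [a1, pτ] at b1
      tauto
  have hE : ∀ i : Fin (2 * k), (x i : ℕ) % 2 = 0 ↔
      ((i : ℕ) % 2 = 0 ↔ (x ⟨0, by omega⟩ : ℕ) % 2 = 0) := by
    intro i
    by_cases hi : (i : ℕ) % 2 = 0
    · have := hpar ((i : ℕ) / 2) (by omega)
      have h2 : (⟨2 * ((i : ℕ) / 2), by omega⟩ : Fin (2 * k)) = i := by ext; simp; omega
      rw [h2] at this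
      tauto
    · have h1 := (pτ i).2 hi
      have := hpar ((tauF k i : ℕ) / 2) (by omega)
      have h2 : (⟨2 * ((tauF k i : ℕ) / 2), by omega⟩ : Fin (2 * k)) = tauF k i := by
        ext; simp; omega
      rw [h2, hx, pτ] at this
      tauto
  by_cases h0 : (x ⟨0, by omega⟩ : ℕ) % 2 = 0
  · apply even_of_pres (tauF k) x (tauF_tauF k) (fun i => (i : ℕ) % 2 = 0) pτ hx
    intro i
    have := hE i
    tauto
  · have := even_of_pres (tauF k) (tauF k * x) (tauF_tauF k) (fun i => (i : ℕ) % 2 = 0) pτ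
      (by intro i; simp [hx]) (by
        intro i
        have := hE i
        have := pτ (x i)
        simp only [Equiv.Perm.mul_apply]
        tauto)
    rwa [Equiv.Perm.sign_mul, sign_tauF, hk.neg_one_pow, one_mul] at this

theorem option_not_mf (k : ℕ) (hk1 : 1 ≤ k) :
    ¬ IsMultFree (((colorStab (fun i : Fin (2 * k) => (i : ℕ) / 2)) ⊓
            alternatingGroup (Fin (2 * k))).map (optionHom (Fin (2 * k)))) := by
  have hsign : ∀ e : Equiv.Perm (Fin (2 * k)),
      Equiv.Perm.sign (optionHom (Fin (2 * k)) e) = Equiv.Perm.sign e :=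
    fun e => Equiv.optionCongr_sign e
  have hsome : ∀ (e : Equiv.Perm (Fin (2 * k))) i, optionHom (Fin (2 * k)) e (some i) = some (e i) :=
    fun e i => rfl
  have hnone : ∀ (e : Equiv.Perm (Fin (2 * k))), optionHom (Fin (2 * k)) e none = none :=
    fun e => rfl
  let z : Fin (2 * k) := ⟨0, by omega⟩
  apply not_mf _ ((colorStab (fun i : Fin (2 * k) => (i : ℕ) / 2)).map (optionHom (Fin (2 * k))))
    Equiv.Perm.sign (Subgroup.map_mono inf_le_left) (fun h hh => by
      obtain ⟨e, he, rfl⟩ := hh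
      rw [hsign]
      have := (Subgroup.mem_inf.1 he).2
      rwa [Equiv.Perm.mem_alternatingGroup] at this)
    (optionHom _ (Equiv.swap z (tauF k z)))
    (Subgroup.mem_map_of_mem _ (swap_mem k _))
    (by rw [hsign]; exact Equiv.Perm.sign_swap (tauF_ne k _).symm)
    (Equiv.swap none (some z) * optionHom _ (finRotate (2 * k)))
  intro x hx hy
  set g := Equiv.swap none (some z) * optionHom _ (finRotate (2 * k)) with hg
  obtain ⟨x', hx', rfl⟩ := hx
  obtain ⟨y', hy', hyy⟩ := hy
  have hx'' := (mem_colorStab_iff k x').1 hx'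
  have hy'' := (mem_colorStab_iff k y').1 hy'
  have hxy : ∀ i, optionHom _ x' (g i) = g (optionHom _ y' i) := by
    intro i; rw [hyy]; simp
  have gnone : g none = some z := by
    rw [hg, Equiv.Perm.mul_apply, hnone, Equiv.swap_apply_left]
  have gsome : ∀ i (h : i + 1 < 2 * k), g (some ⟨i, by omega⟩) = some ⟨i + 1, h⟩ := by
    intro i h
    rw [hg, Equiv.Perm.mul_apply, hsome]
    have : finRotate (2 * k) ⟨i, by omega⟩ = ⟨i + 1, h⟩ := by
      ext; rw [rot_val _ _ h]
    rw [this]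
    apply Equiv.swap_apply_of_ne_of_ne
    · simp
    · simp [z]
  have hfix : ∀ m (h : 2 * m < 2 * k), x' ⟨2 * m, h⟩ = ⟨2 * m, h⟩ ∧
      x' ⟨2 * m + 1, by omega⟩ = ⟨2 * m + 1, by omega⟩ := by
    intro m
    have t1 : ∀ (h : 2 * m < 2 * k), tauF k ⟨2 * m, h⟩ = ⟨2 * m + 1, by omega⟩ := by
      intro h; ext; rw [tauF_val]; simp
    have step : ∀ (h : 2 * m < 2 * k), x' ⟨2 * m, h⟩ = ⟨2 * m, h⟩ →
        x' ⟨2 * m, h⟩ = ⟨2 * m, h⟩ ∧ x' ⟨2 * m + 1, by omega⟩ = ⟨2 * m + 1, by omega⟩ := by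
      intro h h1
      refine ⟨h1, ?_⟩
      rw [← t1 h, hx'', h1]
    induction m with
    | zero =>
      intro h
      apply step
      have := hxy none
      rw [gnone, hnone, gnone, hsome] at this
      exact Option.some.inj this
    | succ m ih =>
      intro h
      apply step
      have t2 : tauF k ⟨2 * m, by omega⟩ = ⟨2 * m + 1, by omega⟩ := by
        ext; rw [tauF_val]; simp
      have h1 := (ih (by intro h; ext; rw [tauF_val]; simp) (by
        intro h h1
        refine ⟨h1, ?_⟩
        have t3 : tauF k ⟨2 * m, h⟩ = ⟨2 * m + 1, by omega⟩ := t2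
        rw [← t3, hx'', h1]) (by omega)).2
      have h2 := hxy (some ⟨2 * m, by omega⟩)
      rw [gsome (2 * m) (by omega), hsome, hsome, h1, ← gsome (2 * m) (by omega)] at h2
      have h3 := Option.some.inj (g.injective h2)
      have h4 := hy'' ⟨2 * m, by omega⟩
      rw [← h3, t2] at h4
      have h5 := hxy (some ⟨2 * m + 1, by omega⟩)
      rw [gsome (2 * m + 1) (by omega), hsome, hsome, h4, gsome (2 * m + 1) (by omega)] at h5
      exact Option.some.inj h5
  have : x' = 1 := by
    ext i
    have h := hfix ((i : ℕ) / 2) (by omega)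
    rcases Nat.mod_two_eq_zero_or_one (i : ℕ) with hi | hi
    · have h2 : (⟨2 * ((i : ℕ) / 2), by omega⟩ : Fin (2 * k)) = i := by ext; simp; omega
      rw [h2] at h
      rw [h.1]; rfl
    · have h2 : (⟨2 * ((i : ℕ) / 2) + 1, by omega⟩ : Fin (2 * k)) = i := by ext; simp; omega
      rw [h2] at h
      rw [h.2]; rfl
  rw [this, map_one, map_one]

theorem stmt10 (k : ℕ) (hk : 1 ≤ k) :
    (IsMultFree ((colorStab (fun i : Fin (2 * k) => (i : ℕ) / 2)) ⊓
        alternatingGroup (Fin (2 * k))) ↔ Odd k) ∧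
      (Odd k →
        ¬ IsMultFree (((colorStab (fun i : Fin (2 * k) => (i : ℕ) / 2)) ⊓
            alternatingGroup (Fin (2 * k))).map (optionHom (Fin (2 * k))))) := by
  refine ⟨⟨fun h => ?_, odd_mf k⟩, fun _ => option_not_mf k hk⟩
  by_contra ho
  exact even_not_mf k hk (Nat.not_odd_iff_even.1 ho) h
end
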